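/- arXiv:2504.17168 — 4 statements merged into one kernel-verified Lean document; each statement's English description precedes it below -/
import Mathlib

section
/- Let F be a normed field whose norm satisfies ‖(n : F)‖ = n for every natural number n (in particular F has characteristic zero), and let A be a non-unital normed algebra over F whose underlying metric space is complete. If A is nil (every element a of A satisfies a^n = 0 for some n ≥ 1), then A is nilpotent (there exists N ≥ 1 such that every product of N elements of A is zero). -/
/-!
By the Baire category theorem one of the closed sets `{a | a ^ n = 0}` contains a ball around some
`a₀`. For every `x` the polynomial `(a₀ + t x) ^ n` in `t` vanishes at `t = 1 / m` for all large `m`,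
so its leading coefficient `x ^ n` is zero: `A` is nil of bounded index
(`exists_uniform_nil_index`).

It remains to prove the Nagata–Higman theorem in characteristic zero (`nagata_higman`), here in the
unitization `R` of `A` and modulo an ideal `J`, by induction on the nil index. If `x ^ (n + 1) ∈ J`
for all `x`, the linear coefficient of `(x + t y) ^ (n + 1)` gives `∑ᵢ xⁱ y xⁿ⁻ⁱ ∈ J`
(`linearized_mem`). Evaluating `∑ᵢⱼ xⁱ z yʲ xⁿ⁻ⁱ yⁿ⁻ʲ` in the two possible orders then gives
`(n + 1) xⁿ z yⁿ ∈ J` (`pow_mul_mul_pow_mem`). Hence the ideal `J'` generated by `J` and all `xⁿ`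
satisfies `J' A J' ⊆ J`, while `A ^ N ⊆ J'` by induction, so that `A ^ (2 N + 1) ⊆ J`.
-/

/-- `nupow a n` is the `(n+1)`-fold product `a * a * ⋯ * a` (so `nupow a n = a ^ (n+1)`);
this makes sense in any (possibly non-unital) multiplicative structure. -/
def nupow {A : Type*} [Mul A] (a : A) : ℕ → A
  | 0 => a
  | n + 1 => nupow a n * a

/-- `A` is nil: every element `a` satisfies `a ^ n = 0` for some `n ≥ 1`. -/
def IsNilAlgebra (A : Type*) [Mul A] [Zero A] : Prop :=
  ∀ a : A, ∃ n : ℕ, nupow a n = 0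

/-- `A` is nilpotent: there is `N ≥ 1` such that every product of `N` elements of `A`
(here written as `a` followed by a list `l` of the remaining `N - 1` factors) is zero. -/
def IsNilpotentAlgebra (A : Type*) [Mul A] [Zero A] : Prop :=
  ∃ N : ℕ, 1 ≤ N ∧ ∀ (a : A) (l : List A), l.length + 1 = N → l.foldl (· * ·) a = 0

open Polynomial Finset

/-- If a polynomial with coefficients in an algebra takes values in a subspace `J` at infinitely many
scalars, then its coefficients lie in `J`: linear functionals on `R ⧸ J` reduce this to polynomials
over the field. -/
lemma coeff_mem_of_infinite {F R : Type*} [Field F] [Ring R] [Algebra F R] (J : Submodule F R)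
    (S : Set F) (hS : S.Infinite) (p : R[X])
    (h : ∀ t ∈ S, p.eval (algebraMap F R t) ∈ J) (k : ℕ) : p.coeff k ∈ J := by
  rw [← Submodule.Quotient.mk_eq_zero, ← Module.forall_dual_apply_eq_zero_iff F]
  intro f
  let g : R →ₗ[F] F := f.comp J.mkQ
  let q : F[X] := ∑ i ∈ range (p.natDegree + 1), monomial i (g (p.coeff i))
  have hq : q = 0 := by
    apply Polynomial.eq_zero_of_infinite_isRoot
    refine hS.mono fun t ht => ?_
    have h1 : g (p.eval (algebraMap F R t)) = 0 := by
      have : J.mkQ (p.eval (algebraMap F R t)) = 0 := by simpa using h t ht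
      simp only [g, LinearMap.comp_apply, this, map_zero]
    rw [eval_eq_sum_range, map_sum] at h1
    change q.eval t = 0
    rw [← h1, eval_finsetSum]
    refine sum_congr rfl fun i _ => ?_
    rw [← map_pow, ← Algebra.commutes, ← Algebra.smul_def, map_smul, eval_monomial, smul_eq_mul,
      mul_comm]
  have hc : q.coeff k = g (p.coeff k) := by
    simp only [q, finsetSum_coeff, coeff_monomial, sum_ite_eq', mem_range]
    split_ifs with hk
    · rfl
    · rw [coeff_eq_zero_of_natDegree_lt (by omega), map_zero]
  rw [hq, coeff_zero] at hc
  exact hc.symm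

lemma eval_linear_pow {F R : Type*} [Field F] [Ring R] [Algebra F R] (x y : R) (t : F) (n : ℕ) :
    ((C x + C y * X) ^ n).eval (algebraMap F R t) = (x + t • y) ^ n := by
  have hc : ∀ r : R, Commute (RingHom.id R r) (algebraMap F R t) :=
    fun r => (Algebra.commutes t r).symm
  change eval₂RingHom' (RingHom.id R) _ hc _ = _
  rw [map_pow]
  congr 1
  change eval _ _ = _
  rw [eval_add, eval_C, eval_C_mul, eval_X, Algebra.smul_def, Algebra.commutes]

lemma coeff_zero_linear_pow {R : Type*} [Ring R] (x y : R) (n : ℕ) :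
    ((C x + C y * X) ^ n).coeff 0 = x ^ n := by
  induction n with
  | zero => simp
  | succ n ih => rw [pow_succ, mul_coeff_zero, ih, pow_succ]; simp

lemma coeff_one_linear_pow {R : Type*} [Ring R] (x y : R) (n : ℕ) :
    ((C x + C y * X) ^ (n + 1)).coeff 1 = ∑ i ∈ range (n + 1), x ^ i * y * x ^ (n - i) := by
  induction n with
  | zero => simp [coeff_C]
  | succ n ih =>
    rw [pow_succ, mul_add, coeff_add, coeff_mul_C, ih, ← mul_assoc, coeff_mul_X, coeff_mul_C,
      coeff_zero_linear_pow, sum_range_succ _ (n + 1), sum_mul]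
    congr 1
    · refine sum_congr rfl fun i hi => ?_
      rw [mem_range] at hi
      rw [mul_assoc, ← pow_succ]
      congr 2
      omega
    · simp

lemma coeff_top_linear_pow {R : Type*} [Ring R] (x y : R) (n : ℕ) :
    ((C x + C y * X) ^ n).coeff n = y ^ n := by
  have hd : (C x + C y * X).natDegree ≤ 1 := by
    rw [add_comm]; exact natDegree_linear_le
  have := coeff_pow_of_natDegree_le (m := n) hd
  rw [mul_one] at this
  rw [this]
  simp [coeff_C]

section NagataHigman

variable {F R : Type*} [Field F] [CharZero F] [Ring R] [Algebra F R]

lemma linearized_mem {B J : Submodule F R} {n : ℕ} (h : ∀ x ∈ B, x ^ (n + 1) ∈ J) {x y : R}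
    (hx : x ∈ B) (hy : y ∈ B) : ∑ i ∈ range (n + 1), x ^ i * y * x ^ (n - i) ∈ J := by
  rw [← coeff_one_linear_pow]
  refine coeff_mem_of_infinite J Set.univ Set.infinite_univ _ (fun t _ => ?_) 1
  rw [eval_linear_pow]
  exact h _ (B.add_mem hx (B.smul_mem t hy))

/-- Higgins' computation: `∑ᵢⱼ xⁱ z yʲ xⁿ⁻ⁱ yⁿ⁻ʲ` lies in `J` when summed over `i` first; summed over
`j` first, all terms with `i < n` lie in `J` and the remaining one is `(n + 1) xⁿ z yⁿ`. -/
lemma pow_mul_mul_pow_mem {B J : Submodule F R} (hB : B * B ≤ B) (hBJ : B * J ≤ J)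
    (hJB : J * B ≤ J) {n : ℕ} (h : ∀ x ∈ B, x ^ (n + 1) ∈ J) {x y z : R}
    (hx : x ∈ B) (hy : y ∈ B) (hz : z ∈ B) : x ^ n * z * y ^ n ∈ J := by
  have hl : ∀ b ∈ B, ∀ k, ∀ a ∈ J, b ^ k * a ∈ J := by
    intro b hb k
    induction k with
    | zero => intro a ha; simpa using ha
    | succ k ih =>
      intro a ha
      rw [pow_succ, mul_assoc]
      exact ih _ (hBJ (Submodule.mul_mem_mul hb ha))
  have hr : ∀ b ∈ B, ∀ k, ∀ a ∈ J, a * b ^ k ∈ J := by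
    intro b hb k
    induction k with
    | zero => intro a ha; simpa using ha
    | succ k ih =>
      intro a ha
      rw [pow_succ, ← mul_assoc]
      exact hJB (Submodule.mul_mem_mul (ih _ ha) hb)
  have hrB : ∀ b ∈ B, ∀ k, ∀ a ∈ B, a * b ^ k ∈ B := by
    intro b hb k
    induction k with
    | zero => intro a ha; simpa using ha
    | succ k ih =>
      intro a ha
      rw [pow_succ, ← mul_assoc]
      exact hB (Submodule.mul_mem_mul (ih _ ha) hb)
  have htot : ∑ i ∈ range (n + 1), ∑ j ∈ range (n + 1),
      x ^ i * z * y ^ j * x ^ (n - i) * y ^ (n - j) ∈ J := by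
    rw [sum_comm]
    refine J.sum_mem fun j _ => ?_
    rw [← sum_mul]
    refine hr y hy _ _ ?_
    simpa only [mul_assoc] using linearized_mem h hx (hrB y hy j z hz)
  rw [sum_range_succ] at htot
  have hfirst : ∑ i ∈ range n, ∑ j ∈ range (n + 1),
      x ^ i * z * y ^ j * x ^ (n - i) * y ^ (n - j) ∈ J := by
    refine J.sum_mem fun i hi => ?_
    rw [mem_range] at hi
    have hxi : x ^ (n - i) ∈ B := by
      obtain ⟨m, hm⟩ : ∃ m, n - i = m + 1 := ⟨n - i - 1, by omega⟩
      rw [hm, pow_succ']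
      exact hrB x hx m x hx
    have := hl x hx i _ (hBJ (Submodule.mul_mem_mul hz (linearized_mem h hy hxi)))
    simpa only [mul_sum, mul_assoc] using this
  have hlast := (J.add_mem_iff_right hfirst).1 htot
  have heq : ∑ j ∈ range (n + 1), x ^ n * z * y ^ j * x ^ (n - n) * y ^ (n - j)
      = ((n + 1 : ℕ) : F) • (x ^ n * z * y ^ n) := by
    rw [Nat.cast_smul_eq_nsmul, ← card_range (n + 1), ← sum_const, card_range]
    refine sum_congr rfl fun j hj => ?_
    rw [mem_range] at hj
    rw [Nat.sub_self, pow_zero, mul_one, mul_assoc, ← pow_add]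
    congr 2
    omega
  rw [heq] at hlast
  exact (J.smul_mem_iff (Nat.cast_ne_zero.2 (Nat.succ_ne_zero n))).1 hlast

/-- The Nagata–Higman theorem for a subalgebra `B` (without unit) of `R`, relative to a subspace `J`
of `B` stable under multiplication by `B` on both sides. -/
lemma nagata_higman {B : Submodule F R} (hB : B * B ≤ B) (n : ℕ) :
    ∀ J : Submodule F R, J ≤ B → B * J ≤ J → J * B ≤ J → (∀ x ∈ B, x ^ (n + 1) ∈ J) →
      ∃ N : ℕ, B ^ (N + 1) ≤ J := by
  induction n with
  | zero =>
    intro J _ _ _ h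
    exact ⟨0, by simpa [SetLike.le_def] using h⟩
  | succ n ih =>
    intro J hJ hBJ hJB h
    let K : Submodule F R := Submodule.span F {a | ∃ x ∈ B, a = x ^ (n + 1)}
    let U : Submodule F R := 1 + B
    have hBU : B * U ≤ B := by
      rw [mul_add, mul_one]; exact sup_le le_rfl hB
    have hUB : U * B ≤ B := by
      rw [add_mul, one_mul]; exact sup_le le_rfl hB
    have hBleU : B ≤ U := le_sup_right
    have hUJ : U * J ≤ J := by
      rw [add_mul, one_mul]; exact sup_le le_rfl hBJ
    have hJU : J * U ≤ J := by
      rw [mul_add, mul_one]; exact sup_le le_rfl hJB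
    have hKBK : K * B * K ≤ J := by
      have hBs : B = Submodule.span F (B : Set R) := (Submodule.span_eq B).symm
      rw [hBs, Submodule.span_mul_span, Submodule.span_mul_span, Submodule.span_le]
      rintro _ ⟨_, ⟨_, ⟨x, hx, rfl⟩, z, hz, rfl⟩, _, ⟨y, hy, rfl⟩, rfl⟩
      exact pow_mul_mul_pow_mem hB hBJ hJB h hx hy hz
    have hKB : K ≤ B := by
      refine Submodule.span_le.2 ?_
      rintro _ ⟨x, hx, rfl⟩
      have hp : ∀ k : ℕ, x ^ (k + 1) ∈ B := by
        intro k
        induction k with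
        | zero => simpa using hx
        | succ k ihk => rw [pow_succ]; exact hB (Submodule.mul_mem_mul ihk hx)
      exact hp n
    have hI : U * K * U ≤ B := by
      calc U * K * U ≤ U * B * U := by gcongr
        _ ≤ B * U := by gcongr
        _ ≤ B := hBU
    -- `J + U K U` is the ideal generated by `J` and all powers `x ^ (n + 1)`.
    obtain ⟨N, hN⟩ := ih (J + U * K * U) (sup_le hJ hI)
      (by
        rw [mul_add, ← mul_assoc, ← mul_assoc]
        exact add_le_add hBJ (by gcongr; exact hBU.trans hBleU))
      (by
        rw [add_mul, mul_assoc (U * K)]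
        exact add_le_add hJB (by gcongr; exact hUB.trans hBleU))
      (by
        intro x hx
        have h1 : K ≤ U * K * U := by
          calc K = 1 * K * 1 := by rw [one_mul, mul_one]
            _ ≤ U * K * U := by gcongr <;> exact le_sup_left
        exact (h1.trans le_sup_right) (Submodule.subset_span ⟨x, hx, rfl⟩))
    refine ⟨2 * N + 2, ?_⟩
    calc B ^ (2 * N + 2 + 1) = B ^ (N + 1) * B * B ^ (N + 1) := by
          rw [← pow_succ, ← pow_add]; congr 1; omega
      _ ≤ (J + U * K * U) * B * (J + U * K * U) := by gcongr
      _ = J * B * J + J * B * (U * K * U) + (U * K * U) * B * J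
            + U * (K * (U * B * U) * K) * U := by
          simp only [add_mul, mul_add, mul_assoc]; abel
      _ ≤ J := by
        refine sup_le (sup_le (sup_le ?_ ?_) ?_) ?_
        · calc J * B * J ≤ J * B * B := by gcongr
            _ ≤ J * B := by gcongr
            _ ≤ J := hJB
        · calc J * B * (U * K * U) ≤ J * B * B := by gcongr
            _ ≤ J * B := by gcongr
            _ ≤ J := hJB
        · calc U * K * U * B * J ≤ B * B * J := by gcongr
            _ ≤ B * J := by gcongr
            _ ≤ J := hBJ
        · calc U * (K * (U * B * U) * K) * U ≤ U * (K * B * K) * U := by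
                gcongr
                exact (mul_le_mul_left hUB U).trans hBU
            _ ≤ U * J * U := by gcongr
            _ ≤ J * U := by gcongr
            _ ≤ J := hJU

lemma foldl_mem_pow {A : Type*} [Mul A] (f : A →ₙ* R) (B : Submodule F R) (hB : ∀ a, f a ∈ B)
    (l : List A) (a : A) (k : ℕ) (ha : f a ∈ B ^ k) :
    f (l.foldl (· * ·) a) ∈ B ^ (k + l.length) := by
  induction l generalizing a k with
  | nil => simpa using ha
  | cons b l ih =>
    rw [List.foldl_cons, List.length_cons, add_comm l.length, ← add_assoc]
    refine ih _ _ ?_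
    rw [map_mul, pow_succ]
    exact Submodule.mul_mem_mul ha (hB b)

/-- The Nagata–Higman theorem for a non-unital algebra embedded in a unital one. -/
lemma isNilpotentAlgebra_of_embedding {A : Type*} [NonUnitalRing A] [Module F A]
    (f : A →ₙₐ[F] R) (hf : Function.Injective f) (n : ℕ) (h : ∀ a, f a ^ (n + 1) = 0) :
    IsNilpotentAlgebra A := by
  let B : Submodule F R := LinearMap.range (f : A →ₗ[F] R)
  have hB : B * B ≤ B := by
    rw [Submodule.mul_le]
    rintro _ ⟨a, rfl⟩ _ ⟨b, rfl⟩
    exact ⟨a * b, map_mul f a b⟩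
  obtain ⟨N, hN⟩ := nagata_higman hB n ⊥ bot_le (by simp) (by simp) (by
    rintro _ ⟨a, rfl⟩
    exact h a)
  refine ⟨N + 1, by omega, fun a l hl => hf ?_⟩
  have hmem := foldl_mem_pow (f : A →ₙ* R) B (fun b => ⟨b, rfl⟩) l a 1
    (by rw [pow_one]; exact ⟨a, rfl⟩)
  rw [add_comm, hl] at hmem
  rw [map_zero]
  exact (Submodule.mem_bot F).1 (hN hmem)

end NagataHigman

lemma continuous_nupow {A : Type*} [NonUnitalNormedRing A] (n : ℕ) :
    Continuous fun a : A => nupow a n := by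
  induction n with
  | zero => exact continuous_id
  | succ n ih => exact ih.mul continuous_id

section Unitization

variable {F A : Type*} [NormedField F] [NonUnitalNormedRing A] [NormedSpace F A]
  [IsScalarTower F A A] [SMulCommClass F A A]

lemma inr_pow_succ (a : A) (n : ℕ) :
    (a : Unitization F A) ^ (n + 1) = (nupow a n : A) := by
  induction n with
  | zero => simp [nupow]
  | succ n ih => rw [pow_succ, ih, nupow, Unitization.inr_mul]

lemma exists_uniform_nil_index [CompleteSpace A] (hnorm : ∀ n : ℕ, ‖(n : F)‖ = n)
    (hnil : IsNilAlgebra A) : ∃ n : ℕ, ∀ x : A, nupow x n = 0 := by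
  have hinj : Function.Injective (Nat.cast : ℕ → F) := fun m n hmn => by
    have h1 : ‖(m : F)‖ = ‖(n : F)‖ := by rw [hmn]
    rw [hnorm, hnorm] at h1
    exact_mod_cast h1
  obtain ⟨n, a, ha⟩ := nonempty_interior_of_iUnion_of_closed
    (f := fun n : ℕ => {a : A | nupow a n = 0})
    (fun n => isClosed_eq (continuous_nupow n) continuous_const)
    (Set.eq_univ_of_forall fun a => Set.mem_iUnion.2 (hnil a))
  refine ⟨n, fun x => ?_⟩
  have hlim : Filter.Tendsto (fun m : ℕ => a + ((m : F)⁻¹) • x) Filter.atTop (nhds a) := by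
    have h0 : Filter.Tendsto (fun m : ℕ => ((m : F)⁻¹)) Filter.atTop (nhds 0) := by
      rw [tendsto_zero_iff_norm_tendsto_zero]
      simpa only [norm_inv, hnorm] using tendsto_inv_atTop_nhds_zero_nat (𝕜 := ℝ)
    simpa using (h0.smul_const x).const_add a
  have hev : ∀ᶠ m : ℕ in Filter.atTop, nupow (a + ((m : F)⁻¹) • x) n = 0 :=
    hlim.eventually (mem_interior_iff_mem_nhds.1 ha)
  have hinf : {t : F | nupow (a + t • x) n = 0}.Infinite := by
    have h1 := Nat.frequently_atTop_iff_infinite.1 hev.frequently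
    refine (h1.image (f := fun m : ℕ => ((m : F)⁻¹))
      (inv_injective.comp hinj).injOn).mono ?_
    rintro _ ⟨m, hm, rfl⟩
    exact hm
  have hx := coeff_mem_of_infinite (⊥ : Submodule F (Unitization F A)) _ hinf
    ((C (a : Unitization F A) + C (x : Unitization F A) * X) ^ (n + 1)) (fun t ht => by
      rw [eval_linear_pow, ← Unitization.inr_smul, ← Unitization.inr_add, inr_pow_succ, ht]
      simp) (n + 1)
  rw [coeff_top_linear_pow, inr_pow_succ, Submodule.mem_bot] at hx
  exact Unitization.inr_injective (hx.trans (Unitization.inr_zero F).symm)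

end Unitization

/-- Every nil complete non-unital normed algebra over a normed field of characteristic zero
(with arithmetic norm) is nilpotent. -/
theorem nil_complete_metric_algebra_is_nilpotent
    (F : Type*) [NormedField F]
    (A : Type*) [NonUnitalNormedRing A] [NormedSpace F A]
    [IsScalarTower F A A] [SMulCommClass F A A] [CompleteSpace A]
    (hnorm : ∀ n : ℕ, ‖(n : F)‖ = n)
    (hnil : IsNilAlgebra A) :
    IsNilpotentAlgebra A := by
  have : CharZero F := ⟨fun m n hmn => by
    have h1 : ‖(m : F)‖ = ‖(n : F)‖ := by rw [hmn]
    rw [hnorm, hnorm] at h1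
    exact_mod_cast h1⟩
  obtain ⟨n, hn⟩ := exists_uniform_nil_index hnorm hnil
  refine isNilpotentAlgebra_of_embedding (Unitization.inrNonUnitalAlgHom F A)
    Unitization.inr_injective n fun a => ?_
  change (a : Unitization F A) ^ (n + 1) = 0
  rw [inr_pow_succ, hn, Unitization.inr_zero]
end

section
/- (Grabiner's Theorem.) Let A be a non-unital normed algebra over ℂ whose underlying metric space is complete (a non-unital Banach algebra). If A is nil (every element a of A satisfies a^n = 0 for some n ≥ 1), then A is nilpotent (there exists N ≥ 1 such that every product of N elements of A is zero). -/
open Polynomial in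
/-- Polynomial identities: if `(x + t • y) ^ n` lies in a subspace for infinitely many `t`, so do
all coefficients of this polynomial in `t`. The constant and the linear one are recorded. -/
lemma coeff_mem_of_infinite_s1 {R : Type*} [Ring R] [Algebra ℂ R] (W : Submodule ℂ R) (x y : R)
    (n : ℕ) (h : {t : ℂ | (x + t • y) ^ n ∈ W}.Infinite) :
    x ^ n ∈ W ∧ ∑ i ∈ Finset.range n, x ^ i * y * x ^ (n - 1 - i) ∈ W := by
  let p : R[X] := (C x + C y * X) ^ n
  have hev : ∀ t : ℂ,
      (x + t • y) ^ n = ∑ k ∈ Finset.range (p.natDegree + 1), t ^ k • p.coeff k := by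
    intro t
    let φ := eval₂RingHom' (RingHom.id R) (algebraMap ℂ R t)
      (fun a => (Algebra.commutes t a).symm)
    have h1 : φ p = (x + t • y) ^ n := by
      simp only [p, map_pow, φ]
      congr 1
      simp [eval₂RingHom', Algebra.smul_def, Algebra.commutes]
    have h2 : φ p = ∑ k ∈ Finset.range (p.natDegree + 1), t ^ k • p.coeff k := by
      change eval₂ _ _ p = _
      rw [eval₂_eq_sum_range]
      refine Finset.sum_congr rfl fun k _ => ?_
      rw [Algebra.smul_def, Algebra.commutes, map_pow]
      rfl
    rw [← h1, h2]
  have hcoeff : ∀ k, p.coeff k ∈ W := by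
    intro k
    by_cases hk : p.natDegree < k
    · rw [coeff_eq_zero_of_natDegree_lt hk]; exact W.zero_mem
    rw [← Submodule.Quotient.mk_eq_zero, ← Module.forall_dual_apply_eq_zero_iff ℂ]
    intro f
    -- A functional killing `W` turns the statement into one about a complex polynomial `q`.
    let q : ℂ[X] := ∑ k ∈ Finset.range (p.natDegree + 1),
      monomial k (f (W.mkQ (p.coeff k)))
    have hq : q = 0 := by
      refine eq_zero_of_infinite_isRoot q (h.mono fun t ht => ?_)
      have ht' : f (W.mkQ ((x + t • y) ^ n)) = 0 := by
        have : W.mkQ ((x + t • y) ^ n) = 0 := (Submodule.Quotient.mk_eq_zero W).2 ht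
        rw [this, map_zero]
      rw [hev t] at ht'
      simp only [map_sum, map_smul, smul_eq_mul] at ht'
      simp only [Set.mem_ofPred_eq, IsRoot, q, eval_finsetSum, eval_monomial]
      rw [← ht']
      exact Finset.sum_congr rfl fun k _ => mul_comm _ _
    have := congrArg (fun r : ℂ[X] => r.coeff k) hq
    simp only [q, finsetSum_coeff, coeff_monomial, coeff_zero, Finset.sum_ite_eq'] at this
    rw [if_pos (Finset.mem_range.2 (by omega))] at this
    exact this
  have h01 : ((C x + C y * X) ^ n : R[X]).coeff 0 = x ^ n ∧
      ((C x + C y * X) ^ n : R[X]).coeff 1 =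
        ∑ i ∈ Finset.range n, x ^ i * y * x ^ (n - 1 - i) := by
    clear hcoeff hev p h
    induction n with
    | zero => simp [coeff_one]
    | succ n ih =>
      refine ⟨by simp [pow_succ, mul_add, ← mul_assoc, ih.1], ?_⟩
      rw [pow_succ, mul_add, ← mul_assoc, coeff_add, coeff_mul_C, coeff_mul_X, coeff_mul_C,
        ih.1, ih.2, Finset.sum_range_succ, Finset.sum_mul]
      congr 1
      · refine Finset.sum_congr rfl fun i hi => ?_
        have := Finset.mem_range.1 hi
        rw [mul_assoc, ← pow_succ]
        congr 2
        omega
      · simp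
  exact ⟨h01.1 ▸ hcoeff 0, h01.2 ▸ hcoeff 1⟩

/-- Higgins' double sum argument. -/
lemma pow_mul_mul_pow_mem_s1 {R : Type*} [Ring R] [Algebra ℂ R] (J K : Submodule ℂ R)
    (hJl : ∀ r, ∀ x ∈ J, r * x ∈ J) (hJr : ∀ r, ∀ x ∈ J, x * r ∈ J)
    (hKl : ∀ r, ∀ x ∈ K, r * x ∈ K) (hKr : ∀ r, ∀ x ∈ K, x * r ∈ K) (m : ℕ)
    (h : ∀ x ∈ J, x ^ (m + 1) ∈ K)
    {x z y : R} (hx : x ∈ J) (hz : z ∈ J) (hy : y ∈ J) : x ^ m * z * y ^ m ∈ K := by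
  have lin : ∀ x ∈ J, ∀ y ∈ J, ∑ i ∈ Finset.range (m + 1), x ^ i * y * x ^ (m - i) ∈ K := by
    intro x hx y hy
    refine (coeff_mem_of_infinite_s1 K x y (m + 1) ?_).2
    convert Set.infinite_univ (α := ℂ)
    rw [Set.eq_univ_iff_forall]
    exact fun t => h _ (J.add_mem hx (J.smul_mem t hy))
  have hK : ∑ i ∈ Finset.range (m + 1), ∑ j ∈ Finset.range (m + 1),
      x ^ i * z * (y ^ j * x ^ (m - i) * y ^ (m - j)) ∈ K := by
    rw [Finset.sum_comm]
    refine K.sum_mem fun j _ => ?_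
    have := hKr (y ^ (m - j)) _ (lin x hx (z * y ^ j) (hJr _ _ hz))
    rw [Finset.sum_mul] at this
    simpa only [mul_assoc] using this
  have hlow : ∀ i ∈ Finset.range m, ∑ j ∈ Finset.range (m + 1),
      x ^ i * z * (y ^ j * x ^ (m - i) * y ^ (m - j)) ∈ K := by
    intro i hi
    have := Finset.mem_range.1 hi
    rw [← Finset.mul_sum]
    refine hKl _ _ (lin y hy _ ?_)
    obtain ⟨k, hk⟩ : ∃ k, m - i = k + 1 := ⟨m - i - 1, by omega⟩
    rw [hk, pow_succ]
    exact hJl _ _ hx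
  rw [Finset.sum_range_succ] at hK
  have htop := (K.add_mem_iff_right (K.sum_mem hlow)).1 hK
  -- Every summand with `i = m` equals `x ^ m * z * y ^ m`, so the remaining sum is `m + 1` times it.
  have hconst : ∑ j ∈ Finset.range (m + 1), x ^ m * z * (y ^ j * x ^ (m - m) * y ^ (m - j)) =
      ((m + 1 : ℕ) : ℂ) • (x ^ m * z * y ^ m) := by
    rw [Nat.cast_smul_eq_nsmul, ← Finset.card_range (m + 1), ← Finset.sum_const,
      Finset.card_range]
    refine Finset.sum_congr rfl fun j hj => ?_
    have := Finset.mem_range.1 hj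
    rw [Nat.sub_self, pow_zero, mul_one, ← pow_add, Nat.add_sub_cancel' (by omega)]
  rw [hconst] at htop
  exact (K.smul_mem_iff (Nat.cast_ne_zero.2 (Nat.succ_ne_zero m))).1 htop

/-- The Nagata–Higman theorem relative to ideals `K` of a `ℂ`-algebra: if `J` is nil of index `n`
modulo `K`, then `J` is nilpotent modulo `K`, with exponent depending only on `n`. -/
theorem nagata_higman_s1 {R : Type*} [Ring R] [Algebra ℂ R] (J : Submodule ℂ R)
    (hJl : ∀ r, ∀ x ∈ J, r * x ∈ J) (hJr : ∀ r, ∀ x ∈ J, x * r ∈ J) (n : ℕ) :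
    ∃ N : ℕ, ∀ K : Submodule ℂ R, (∀ r, ∀ x ∈ K, r * x ∈ K) → (∀ r, ∀ x ∈ K, x * r ∈ K) →
      (∀ x ∈ J, x ^ n ∈ K) → ∀ l : List R, (∀ x ∈ l, x ∈ J) → l.length = N → l.prod ∈ K := by
  induction n with
  | zero =>
    refine ⟨0, fun K hKl _ h l _ _ => ?_⟩
    simpa using hKl l.prod _ (h 0 J.zero_mem)
  | succ m ih =>
    obtain ⟨M, hM⟩ := ih
    refine ⟨2 * M + 1, fun K hKl hKr h l hl hlen => ?_⟩
    -- `K'` is the ideal generated by `K` and the powers `x ^ m` with `x ∈ J`.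
    let S : Set R := {p | p ∈ K ∨ ∃ r s : R, ∃ x ∈ J, p = r * x ^ m * s}
    let K' : Submodule ℂ R := Submodule.span ℂ S
    have hl' : ∀ r, ∀ x ∈ K', r * x ∈ K' := by
      intro r x hx
      induction hx using Submodule.span_induction with
      | mem p hp =>
        refine Submodule.subset_span ?_
        rcases hp with hp | ⟨a, b, x, hx, rfl⟩
        · exact Or.inl (hKl _ _ hp)
        · exact Or.inr ⟨r * a, b, x, hx, by simp only [mul_assoc]⟩
      | zero => rw [mul_zero]; exact K'.zero_mem
      | add p q _ _ hp hq => rw [mul_add]; exact K'.add_mem hp hq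
      | smul c p _ hp => rw [mul_smul_comm]; exact K'.smul_mem c hp
    have hr' : ∀ r, ∀ x ∈ K', x * r ∈ K' := by
      intro r x hx
      induction hx using Submodule.span_induction with
      | mem p hp =>
        refine Submodule.subset_span ?_
        rcases hp with hp | ⟨a, b, x, hx, rfl⟩
        · exact Or.inl (hKr _ _ hp)
        · exact Or.inr ⟨a, b * r, x, hx, by simp only [mul_assoc]⟩
      | zero => rw [zero_mul]; exact K'.zero_mem
      | add p q _ _ hp hq => rw [add_mul]; exact K'.add_mem hp hq
      | smul c p _ hp => rw [smul_mul_assoc]; exact K'.smul_mem c hp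
    have hpow : ∀ x ∈ J, x ^ m ∈ K' := fun x hx =>
      Submodule.subset_span (Or.inr ⟨1, 1, x, hx, by simp⟩)
    have key : ∀ p ∈ K', ∀ a ∈ J, ∀ q ∈ K', p * a * q ∈ K := by
      intro p hp a ha q hq
      induction hp using Submodule.span_induction with
      | zero => simp
      | add p p' _ _ h1 h2 => rw [add_mul, add_mul]; exact K.add_mem h1 h2
      | smul c p _ h1 => rw [smul_mul_assoc, smul_mul_assoc]; exact K.smul_mem c h1
      | mem p hp =>
        rcases hp with hp | ⟨r, s, x, hx, rfl⟩
        · exact hKr _ _ (hKr _ _ hp)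
        induction hq using Submodule.span_induction with
        | zero => simp
        | add q q' _ _ h1 h2 => rw [mul_add]; exact K.add_mem h1 h2
        | smul c q _ h1 => rw [mul_smul_comm]; exact K.smul_mem c h1
        | mem q hq =>
          rcases hq with hq | ⟨r', s', y, hy, rfl⟩
          · exact hKl _ _ hq
          have := hKl r _ (hKr s' _ (pow_mul_mul_pow_mem_s1 J K hJl hJr hKl hKr m h hx
            (hJr r' _ (hJl s _ ha)) hy))
          simpa only [mul_assoc] using this
    obtain ⟨a, t, ht⟩ : ∃ a t, l.drop M = a :: t := by
      refine List.exists_cons_of_length_pos ?_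
      rw [List.length_drop]; omega
    have hdrop : ∀ x ∈ a :: t, x ∈ J := fun x hx =>
      hl x (List.mem_of_mem_drop (ht ▸ hx))
    have hlt : t.length = M := by
      have := congrArg List.length ht
      rw [List.length_drop, List.length_cons] at this
      omega
    rw [← List.prod_take_mul_prod_drop l M, ht, List.prod_cons, ← mul_assoc]
    refine key _ (hM K' hl' hr' hpow _ (fun x hx => hl x (List.mem_of_mem_take hx)) ?_) a
      (hdrop a (by simp)) _ (hM K' hl' hr' hpow t (fun x hx => hdrop x (by simp [hx])) hlt)
    rw [List.length_take]; omega

lemma inr_nupow {A : Type*} [NonUnitalNormedRing A] [NormedSpace ℂ A]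
    [IsScalarTower ℂ A A] [SMulCommClass ℂ A A] (a : A) (n : ℕ) :
    (Unitization.inr (nupow a n) : Unitization ℂ A) = Unitization.inr a ^ (n + 1) := by
  induction n with
  | zero => simp [nupow]
  | succ n ih => rw [nupow, Unitization.inr_mul, ih, ← pow_succ]

lemma smul_pow_eq_zero {R : Type*} [Ring R] [Algebra ℂ R] (c : ℂ) {z : R} (n : ℕ)
    (h : z ^ n = 0) : (c • z) ^ n = 0 := by
  rw [smul_pow, h, smul_zero]

/-- Baire category: a nil Banach algebra is nil of bounded index. -/
lemma exists_nupow_eq_zero {A : Type*} [NonUnitalNormedRing A] [NormedSpace ℂ A]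
    [IsScalarTower ℂ A A] [SMulCommClass ℂ A A] [CompleteSpace A] (hnil : IsNilAlgebra A) :
    ∃ n : ℕ, ∀ b : A, nupow b n = 0 := by
  have hcont : ∀ n : ℕ, Continuous fun a : A => nupow a n := by
    intro n
    induction n with
    | zero => exact continuous_id
    | succ n ih => exact ih.mul continuous_id
  obtain ⟨n, a₀, ha₀⟩ := nonempty_interior_of_iUnion_of_closed
    (f := fun n : ℕ => {a : A | nupow a n = 0})
    (fun n => isClosed_eq (hcont n) continuous_const)
    (Set.eq_univ_iff_forall.2 fun a => Set.mem_iUnion.2 (hnil a))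
  refine ⟨n, fun b => ?_⟩
  have hU : {s : ℂ | nupow (a₀ + s • b) n = 0} ∈ nhds (0 : ℂ) := by
    have hc : Continuous fun s : ℂ => a₀ + s • b := by fun_prop
    have hmem : {a : A | nupow a n = 0} ∈ nhds (a₀ + (0 : ℂ) • b) := by
      simpa using mem_interior_iff_mem_nhds.1 ha₀
    exact hc.continuousAt.preimage_mem_nhds hmem
  have hinf := ((infinite_of_mem_nhds (0 : ℂ) hU).sdiff (Set.finite_singleton 0)).image
    (f := fun s : ℂ => s⁻¹) inv_injective.injOn
  have := (coeff_mem_of_infinite_s1 (⊥ : Submodule ℂ (Unitization ℂ A)) (Unitization.inr b)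
    (Unitization.inr a₀) (n + 1) (hinf.mono ?_)).1
  · rw [Submodule.mem_bot, ← inr_nupow] at this
    exact Unitization.inr_injective (this.trans (Unitization.inr_zero ℂ).symm)
  · rintro _ ⟨s, ⟨hs, hs0⟩, rfl⟩
    have hs0' : s ≠ 0 := hs0
    have hs' : nupow (a₀ + s • b) n = 0 := hs
    -- `b + s⁻¹ • a₀` is a multiple of `a₀ + s • b`, which is close to `a₀`.
    have e : (Unitization.inr b + s⁻¹ • Unitization.inr a₀ : Unitization ℂ A) =
        s⁻¹ • Unitization.inr (a₀ + s • b) := by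
      rw [Unitization.inr_add, Unitization.inr_smul, smul_add, smul_smul,
        inv_mul_cancel₀ hs0', one_smul, add_comm]
    change _ ∈ (⊥ : Submodule ℂ (Unitization ℂ A))
    rw [Submodule.mem_bot, e]
    refine smul_pow_eq_zero (R := Unitization ℂ A) _ _ ?_
    rw [← inr_nupow, hs', Unitization.inr_zero]

/-- Grabiner's Theorem: a nil non-unital Banach algebra over ℂ is nilpotent. -/
theorem grabiner_nil_banach_algebra_is_nilpotent
    (A : Type*) [NonUnitalNormedRing A] [NormedSpace ℂ A]
    [IsScalarTower ℂ A A] [SMulCommClass ℂ A A] [CompleteSpace A]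
    (hnil : IsNilAlgebra A) :
    IsNilpotentAlgebra A := by
  obtain ⟨n, hn⟩ := exists_nupow_eq_zero hnil
  let J : Submodule ℂ (Unitization ℂ A) := LinearMap.ker (Unitization.fstHom ℂ A).toLinearMap
  have hJ : ∀ x, x ∈ J ↔ x.fst = 0 := fun x => Iff.rfl
  obtain ⟨N, hN⟩ := nagata_higman_s1 J
    (fun r x hx => by rw [hJ] at *; rw [Unitization.fst_mul, hx, mul_zero])
    (fun r x hx => by rw [hJ] at *; rw [Unitization.fst_mul, hx, zero_mul]) (n + 1)
  have hz := hN ⊥ (by simp) (by simp) (by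
    intro x hx
    have e : x = Unitization.inr x.snd := Unitization.ext hx rfl
    rw [e, ← inr_nupow, hn, Unitization.inr_zero]
    exact Submodule.zero_mem _)
  have hfold : ∀ (l : List A) (a : A), (Unitization.inr (l.foldl (· * ·) a) : Unitization ℂ A) =
      Unitization.inr a * (l.map (Unitization.inr : A → Unitization ℂ A)).prod := by
    intro l
    induction l with
    | nil => simp
    | cons b l ih => intro a; simp [ih, mul_assoc]
  -- `N` could be `0`, in which case `A` is trivial, so `N + 1` factors are used.
  refine ⟨N + 1, by omega, fun a l hl => ?_⟩
  have h0 := hz (l.map Unitization.inr) (by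
    intro x hx
    obtain ⟨b, _, rfl⟩ := List.mem_map.1 hx
    exact Unitization.fst_inr ℂ b) (by rw [List.length_map]; omega)
  rw [Submodule.mem_bot] at h0
  have := hfold l a
  rw [h0, mul_zero] at this
  exact Unitization.inr_injective (this.trans (Unitization.inr_zero ℂ).symm)
end

section
/- Let F be a normed field whose norm satisfies ‖(n : F)‖ = n for every natural number n, and let A be a non-unital normed algebra over F (completeness not assumed). Fix n ≥ 1. If the set {a : A | a^n = 0} has nonempty interior in A, then a^n = 0 for every a ∈ A. -/
/-- The expansion of `(a + t b) ^ (n+1)` in powers of `t`, with `t`-independent coefficients `c k`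
that vanish for `k > n + 1` and whose leading one is `b ^ (n+1)`. -/
lemma exists_nupow_add_smul_eq_sum (F : Type*) [Field F] {A : Type*} [NonUnitalRing A] [Module F A]
    [IsScalarTower F A A] [SMulCommClass F A A] (a b : A) (n : ℕ) :
    ∃ c : ℕ → A, (∀ t : F, nupow (a + t • b) n = ∑ k ∈ Finset.range (n + 2), t ^ k • c k) ∧
      c (n + 1) = nupow b n ∧ ∀ k, n + 1 < k → c k = 0 := by
  induction n with
  | zero =>
    refine ⟨fun k => if k = 0 then a else if k = 1 then b else 0, fun t => ?_, ?_, ?_⟩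
    · simp [Finset.sum_range_succ, nupow]
    · simp [nupow]
    · intro k hk
      have h0 : k ≠ 0 := by omega
      have h1 : k ≠ 1 := by omega
      simp [h0, h1]
  | succ n ih =>
    obtain ⟨c, hc, hlead, hzero⟩ := ih
    refine ⟨fun k => c k * a + (if k = 0 then 0 else c (k - 1) * b), fun t => ?_, ?_, ?_⟩
    · have h1 : ∑ k ∈ Finset.range (n + 1 + 2), t ^ k • (c k * a)
          = ∑ k ∈ Finset.range (n + 2), t ^ k • (c k * a) := by
        rw [Finset.sum_range_succ, hzero (n + 2) (by omega)]
        simp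
      have h2 : ∑ k ∈ Finset.range (n + 1 + 2), t ^ k • (if k = 0 then 0 else c (k - 1) * b)
          = ∑ k ∈ Finset.range (n + 2), t ^ (k + 1) • (c k * b) := by
        rw [Finset.sum_range_succ']
        simp
      simp only [smul_add, Finset.sum_add_distrib]
      rw [h1, h2, nupow, hc t, mul_add, Finset.sum_mul, Finset.sum_mul]
      congr 1 <;> refine Finset.sum_congr rfl fun k _ => ?_
      · rw [smul_mul_assoc]
      · rw [smul_mul_assoc, mul_smul_comm, smul_smul, pow_succ]
    · simp [hzero (n + 2) (by omega), hlead, nupow]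
    · intro k hk
      simp [hzero k (by omega), hzero (k - 1) (by omega)]

/-- A polynomial function with vector coefficients and infinitely many zeros has zero coefficients:
linear functionals separate points, and reduce this to the scalar case. -/
lemma coeff_eq_zero_of_infinite_zeros {F V : Type*} [Field F] [AddCommGroup V] [Module F V]
    (c : ℕ → V) (N : ℕ) (S : Set F) (hS : S.Infinite)
    (h : ∀ t ∈ S, ∑ k ∈ Finset.range N, t ^ k • c k = 0) (j : ℕ) (hj : j < N) : c j = 0 := by
  rw [← Module.forall_dual_apply_eq_zero_iff F]
  intro f
  have hp : (∑ k ∈ Finset.range N, Polynomial.monomial k (f (c k))) = 0 := by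
    refine Polynomial.eq_zero_of_infinite_isRoot _ (hS.mono fun t ht => ?_)
    have := congrArg f (h t ht)
    simpa [Polynomial.IsRoot, Polynomial.eval_finsetSum, mul_comm] using this
  have := congrArg (fun p => Polynomial.coeff p j) hp
  simpa [Polynomial.finsetSum_coeff, Polynomial.coeff_monomial, hj] using this

/-- If the set of elements with `a ^ (n+1) = 0` has nonempty interior in a non-unital normed
algebra over a normed field with arithmetic norm, then `a ^ (n+1) = 0` for every `a`. -/
theorem pow_eq_zero_of_nonempty_interior
    (F : Type*) [NormedField F]
    (A : Type*) [NonUnitalNormedRing A] [NormedSpace F A]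
    [IsScalarTower F A A] [SMulCommClass F A A]
    (hnorm : ∀ n : ℕ, ‖(n : F)‖ = n)
    (n : ℕ)
    (hint : (interior {a : A | nupow a n = 0}).Nonempty) :
    ∀ a : A, nupow a n = 0 := by
  intro b
  obtain ⟨a, ha⟩ := hint
  obtain ⟨c, hc, hlead, -⟩ := exists_nupow_add_smul_eq_sum F a b n
  have hlim : Filter.Tendsto (fun m : ℕ => (((m + 1 : ℕ) : F))⁻¹) Filter.atTop (nhds 0) := by
    rw [tendsto_zero_iff_norm_tendsto_zero]
    simp only [norm_inv, hnorm]
    exact (tendsto_inv_atTop_nhds_zero_nat (𝕜 := ℝ)).comp (Filter.tendsto_add_atTop_nat 1)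
  have hlim' : Filter.Tendsto (fun m : ℕ => a + (((m + 1 : ℕ) : F))⁻¹ • b) Filter.atTop
      (nhds a) := by
    simpa using (hlim.smul_const b).const_add a
  obtain ⟨M, hM⟩ := Filter.eventually_atTop.1
    (hlim'.eventually (mem_interior_iff_mem_nhds.1 ha))
  have hinj : Function.Injective (fun m : ℕ => (((M + m + 1 : ℕ) : F))⁻¹) := by
    intro m m' h
    have h' := congrArg norm (inv_injective h)
    rw [hnorm, hnorm, Nat.cast_inj] at h'
    omega
  rw [← hlead]
  refine coeff_eq_zero_of_infinite_zeros c (n + 2) _ (Set.infinite_range_of_injective hinj) ?_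
    (n + 1) (by omega)
  rintro _ ⟨m, rfl⟩
  rw [← hc]
  exact hM (M + m) (by omega)
end

section
/- (Köthe's Problem for complete metric algebras.) Let F be a normed field whose norm satisfies ‖(n : F)‖ = n for every natural number n, and let A be a non-unital normed algebra over F whose underlying metric space is complete. If A has no nonzero nil two-sided ideals, then A has no nonzero nil one-sided ideals: every left ideal L of A all of whose elements a satisfy a^n = 0 for some n ≥ 1 is the zero ideal, and likewise for right ideals. -/
/-- `rpow u y n` is `y * u ^ n`, which makes sense for `n = 0` without a unit. -/
def rpow {A : Type*} [Mul A] (u y : A) : ℕ → A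
  | 0 => y
  | n + 1 => rpow u y n * u

/-- The derivative of `b ↦ x * (b * x) ^ n` at `b` in the direction `c`. -/
def dpow {A : Type*} [NonUnitalRing A] (x b c : A) : ℕ → A
  | 0 => 0
  | n + 1 => dpow x b c n * (b * x) + rpow (b * x) x n * (c * x)

section Algebra

variable {A : Type*} [NonUnitalRing A]

lemma rpow_mul_left (u z y : A) (n : ℕ) : rpow u (z * y) n = z * rpow u y n := by
  induction n with
  | zero => rfl
  | succ n ih => simp only [rpow, ih, mul_assoc]

lemma rpow_mul_self (u y : A) (n : ℕ) : rpow u (y * u) n = rpow u y (n + 1) := by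
  induction n with
  | zero => rfl
  | succ n ih => rw [rpow, ih]; rfl

lemma rpow_add_left (u y z : A) (n : ℕ) : rpow u (y + z) n = rpow u y n + rpow u z n := by
  induction n with
  | zero => rfl
  | succ n ih => simp only [rpow, ih, add_mul]

lemma rpow_zero_left (u : A) (n : ℕ) : rpow u 0 n = 0 := by
  induction n with
  | zero => rfl
  | succ n ih => simp only [rpow, ih, zero_mul]

lemma rpow_eq_zero_of_le {u y : A} {m n : ℕ} (hmn : m ≤ n) (h : rpow u y m = 0) :
    rpow u y n = 0 := by
  induction n, hmn using Nat.le_induction with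
  | base => exact h
  | succ n _ ih => simp only [rpow, ih, zero_mul]

lemma rpow_succ_eq_mul_nupow (u y : A) (n : ℕ) : rpow u y (n + 1) = y * nupow u n := by
  induction n with
  | zero => rfl
  | succ n ih => rw [rpow, ih, nupow, mul_assoc]

lemma rpow_succ_eq_nupow_mul (b x : A) (n : ℕ) :
    rpow (b * x) x (n + 1) = nupow (x * b) n * x := by
  induction n with
  | zero => simp only [rpow, nupow, mul_assoc]
  | succ n ih => rw [rpow, ih, nupow]; simp only [mul_assoc]

lemma rpow_dpow_succ (x b c : A) (i j : ℕ) :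
    rpow (b * x) (dpow x b c (j + 1)) i =
      rpow (b * x) (dpow x b c j) (i + 1) + rpow (b * x) x j * c * rpow (b * x) x i := by
  rw [dpow, rpow_add_left, rpow_mul_self, ← mul_assoc (rpow (b * x) x j) c x, rpow_mul_left]

/-- If `x (b x)^(k+1) = 0`, the derivative of `x (b x)^j` for `j ≤ k` is killed by right
multiplication by `(b x)^(2k+1-j)`: each of its terms ends in `x (b x)^l` with `l > k`. -/
lemma rpow_dpow_eq_zero {x b : A} (c : A) {k : ℕ} (h : rpow (b * x) x (k + 1) = 0) :
    ∀ j i : ℕ, j ≤ k → i + j = 2 * k + 1 → rpow (b * x) (dpow x b c j) i = 0 := by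
  intro j
  induction j with
  | zero => intro i _ _; exact rpow_zero_left _ _
  | succ j ih =>
    intro i hj hi
    rw [rpow_dpow_succ, ih (i + 1) (by omega) (by omega),
      rpow_eq_zero_of_le (by omega : k + 1 ≤ i) h, mul_zero, add_zero]

lemma sandwich_of_dpow_eq_zero {x b c : A} {k : ℕ} (h : rpow (b * x) x (k + 1) = 0)
    (hd : dpow x b c (k + 1) = 0) :
    rpow (b * x) x k * c * rpow (b * x) x k = 0 := by
  have := rpow_dpow_succ x b c k k
  rw [hd, rpow_zero_left, rpow_dpow_eq_zero c h k (k + 1) le_rfl (by omega), zero_add] at this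
  exact this.symm

/-- Semiprimeness: a ring without nonzero nil ideals has no nonzero `w` with `w A w = 0`. -/
lemma eq_zero_of_sandwich
    (htwo : ∀ I : AddSubgroup A,
      (∀ (a : A) (x : A), x ∈ I → a * x ∈ I) →
      (∀ (a : A) (x : A), x ∈ I → x * a ∈ I) →
      (∀ x ∈ I, ∃ n : ℕ, nupow x n = 0) → I = ⊥)
    {w : A} (hw : ∀ c : A, w * c * w = 0) : w = 0 := by
  -- The one-sided annihilators of `A` are two-sided ideals with zero square.
  have hl : ∀ y : A, (∀ a, y * a = 0) → y = 0 := by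
    intro y hy
    let N : AddSubgroup A :=
      { carrier := {y | ∀ a, y * a = 0}
        zero_mem' := fun a => zero_mul a
        add_mem' := fun {p q} hp hq a => by rw [add_mul, hp a, hq a, add_zero]
        neg_mem' := fun {p} hp a => by rw [neg_mul, hp a, neg_zero] }
    have hN : N = ⊥ := htwo N
      (fun a p hp c => by rw [mul_assoc, hp c, mul_zero])
      (fun a p hp c => by rw [hp a, zero_mul])
      (fun p hp => ⟨1, hp p⟩)
    have : y ∈ N := hy
    rwa [hN, AddSubgroup.mem_bot] at this
  have hr : ∀ y : A, (∀ a, a * y = 0) → y = 0 := by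
    intro y hy
    let N : AddSubgroup A :=
      { carrier := {y | ∀ a, a * y = 0}
        zero_mem' := fun a => mul_zero a
        add_mem' := fun {p q} hp hq a => by rw [mul_add, hp a, hq a, add_zero]
        neg_mem' := fun {p} hp a => by rw [mul_neg, hp a, neg_zero] }
    have hN : N = ⊥ := htwo N
      (fun a p hp c => by rw [hp a, mul_zero])
      (fun a p hp c => by rw [← mul_assoc, hp c, zero_mul])
      (fun p hp => ⟨1, hp p⟩)
    have : y ∈ N := hy
    rwa [hN, AddSubgroup.mem_bot] at this
  -- The ideal `A w A` also has zero square.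
  let S : Set A := {y | ∃ a b, y = a * w * b}
  have hI : AddSubgroup.closure S = ⊥ := by
    apply htwo
    · intro a y hy
      induction hy using AddSubgroup.closure_induction with
      | mem y hy =>
        obtain ⟨p, q, rfl⟩ := hy
        exact AddSubgroup.subset_closure ⟨a * p, q, by simp only [mul_assoc]⟩
      | zero => rw [mul_zero]; exact zero_mem _
      | add p q _ _ hp hq => rw [mul_add]; exact add_mem hp hq
      | neg p _ hp => rw [mul_neg]; exact neg_mem hp
    · intro a y hy
      induction hy using AddSubgroup.closure_induction with
      | mem y hy =>
        obtain ⟨p, q, rfl⟩ := hy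
        exact AddSubgroup.subset_closure ⟨p, q * a, by simp only [mul_assoc]⟩
      | zero => rw [zero_mul]; exact zero_mem _
      | add p q _ _ hp hq => rw [add_mul]; exact add_mem hp hq
      | neg p _ hp => rw [neg_mul]; exact neg_mem hp
    · have hsq : ∀ y ∈ AddSubgroup.closure S, ∀ z ∈ AddSubgroup.closure S, y * z = 0 := by
        intro y hy z hz
        induction hy, hz using AddSubgroup.closure_induction₂ with
        | mem y z hy hz =>
          obtain ⟨p, q, rfl⟩ := hy
          obtain ⟨r, s, rfl⟩ := hz
          calc p * w * q * (r * w * s) = p * (w * (q * r) * w) * s := by simp only [mul_assoc]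
            _ = 0 := by rw [hw, mul_zero, zero_mul]
        | zero_left => exact zero_mul _
        | zero_right => exact mul_zero _
        | add_left _ _ _ _ _ _ h1 h2 => rw [add_mul, h1, h2, add_zero]
        | add_right _ _ _ _ _ _ h1 h2 => rw [mul_add, h1, h2, add_zero]
        | neg_left _ _ _ _ h => rw [neg_mul, h, neg_zero]
        | neg_right _ _ _ _ h => rw [mul_neg, h, neg_zero]
      exact fun y hy => ⟨1, hsq y hy y hy⟩
  refine hr w fun a => hl _ fun b => ?_
  have : a * w * b ∈ AddSubgroup.closure S := AddSubgroup.subset_closure ⟨a, b, rfl⟩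
  rwa [hI, AddSubgroup.mem_bot] at this

end Algebra

section Analysis

variable {A : Type*} [NonUnitalNormedRing A]

lemma continuous_rpow (x : A) (n : ℕ) : Continuous fun b : A => rpow (b * x) x n := by
  induction n with
  | zero => exact continuous_const
  | succ n ih => exact ih.mul (continuous_id.mul continuous_const)

lemma hasDerivAt_rpow {F : Type*} [NontriviallyNormedField F] [NormedSpace F A]
    [IsScalarTower F A A] [SMulCommClass F A A] (x b c : A) (n : ℕ) :
    HasDerivAt (fun t : F => rpow ((b + t • c) * x) x n) (dpow x b c n) 0 := by
  induction n with
  | zero => exact hasDerivAt_const _ _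
  | succ n ih =>
    have hlin : HasDerivAt (fun t : F => (b + t • c) * x) (c * x) 0 := by
      have h := ((hasDerivAt_id (0 : F)).smul_const (c * x)).const_add (b * x)
      simpa [add_mul, smul_mul_assoc] using h
    have h := (ContinuousLinearMap.mul F A).hasDerivAt_of_bilinear (fun _ => ih) (fun _ => hlin)
    simpa [rpow, dpow, add_comm] using h

/-- If `x (b x)^n` vanishes on a nonempty open set of `b`, so do all the lower powers, down to
`x` itself. -/
lemma open_descent {F : Type*} [NontriviallyNormedField F] [NormedSpace F A]
    [IsScalarTower F A A] [SMulCommClass F A A]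
    (hsemi : ∀ w : A, (∀ c : A, w * c * w = 0) → w = 0)
    {U : Set A} (hU : IsOpen U) (hne : U.Nonempty) (x : A) (n : ℕ)
    (h : ∀ b ∈ U, rpow (b * x) x n = 0) : x = 0 := by
  induction n with
  | zero => exact h _ hne.some_mem
  | succ k ih =>
    refine ih fun b hb => hsemi _ fun c => sandwich_of_dpow_eq_zero (h b hb) ?_
    have hcont : Continuous fun t : F => b + t • c := by fun_prop
    have hev : (fun t : F => rpow ((b + t • c) * x) x (k + 1)) =ᶠ[nhds 0] fun _ => (0 : A) := by
      have : ∀ᶠ t : F in nhds 0, b + t • c ∈ U :=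
        hcont.continuousAt.eventually_mem (hU.mem_nhds (by simpa using hb))
      exact this.mono fun t ht => h _ ht
    exact (hasDerivAt_rpow (F := F) x b c (k + 1)).unique
      ((hasDerivAt_const (0 : F) (0 : A)).congr_of_eventuallyEq hev)

end Analysis

/-- Köthe's Problem has a positive answer for complete non-unital normed algebras over a
normed field of characteristic zero (with arithmetic norm): if `A` has no nonzero nil
two-sided ideals, then every nil left ideal and every nil right ideal of `A` is zero. -/
theorem kothe_problem_for_complete_metric_algebras
    (F : Type*) [NormedField F]
    (A : Type*) [NonUnitalNormedRing A] [NormedSpace F A]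
    [IsScalarTower F A A] [SMulCommClass F A A] [CompleteSpace A]
    (hnorm : ∀ n : ℕ, ‖(n : F)‖ = n)
    (htwo : ∀ I : AddSubgroup A,
      (∀ (a : A) (x : A), x ∈ I → a * x ∈ I) →
      (∀ (a : A) (x : A), x ∈ I → x * a ∈ I) →
      (∀ x ∈ I, ∃ n : ℕ, nupow x n = 0) → I = ⊥) :
    (∀ L : AddSubgroup A,
      (∀ (a : A) (x : A), x ∈ L → a * x ∈ L) →
      (∀ x ∈ L, ∃ n : ℕ, nupow x n = 0) → L = ⊥) ∧
    (∀ R : AddSubgroup A,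
      (∀ (a : A) (x : A), x ∈ R → x * a ∈ R) →
      (∀ x ∈ R, ∃ n : ℕ, nupow x n = 0) → R = ⊥) := by
  let _ : NontriviallyNormedField F :=
    { ‹NormedField F› with
      non_trivial := ⟨2, by have := hnorm 2; push_cast at this; rw [this]; norm_num⟩ }
  have core : ∀ x : A, (∀ b : A, ∃ n, rpow (b * x) x n = 0) → x = 0 := by
    intro x hx
    obtain ⟨n, hn⟩ := nonempty_interior_of_iUnion_of_closed
      (f := fun n => {b : A | rpow (b * x) x n = 0})
      (fun n => isClosed_eq (continuous_rpow x n) continuous_const)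
      (Set.eq_univ_of_forall fun b => Set.mem_iUnion.2 (hx b))
    exact open_descent (F := F) (fun w hw => eq_zero_of_sandwich htwo hw) isOpen_interior hn x n
      fun b hb => interior_subset (s := {b : A | rpow (b * x) x n = 0}) hb
  constructor
  · intro L hL hnil
    refine (AddSubgroup.eq_bot_iff_forall L).2 fun x hx => core x fun b => ?_
    obtain ⟨n, hn⟩ := hnil _ (hL b x hx)
    exact ⟨n + 1, by rw [rpow_succ_eq_mul_nupow, hn, mul_zero]⟩
  · intro R hR hnil
    refine (AddSubgroup.eq_bot_iff_forall R).2 fun x hx => core x fun b => ?_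
    obtain ⟨n, hn⟩ := hnil _ (hR b x hx)
    exact ⟨n + 1, by rw [rpow_succ_eq_nupow_mul, hn, zero_mul]⟩
end
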